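/- Let P be a symmetric positive definite n×n real matrix, x* ∈ ℝⁿ, and V(y) = (y − x*)ᵀ P (y − x*). Let x : ℝ → ℝⁿ be a differentiable curve, and suppose that at some time t with x(t) ≠ x* the velocity satisfies x'(t) = M f, where f ∈ ℝⁿ satisfies 2 (x(t) − x*)ᵀ P f < 0, and M = E D E⁻¹ with E an invertible n×n matrix whose first column is r = (x(t) − x*)/‖x(t) − x*‖, D = diag(1 − Γ, 1, …, 1) for some Γ > 0, and (E⁻¹ f)₁ ≥ 0. Then the function t ↦ V(x(t)) has strictly negative derivative at t. -/

import Mathlib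

/-!
Modulation subtracts from `f` a nonnegative multiple of the first column of `E`. That column points
along `u = x(t) − x*`, so `uᵀ P (M f)` is `uᵀ P f` minus a nonnegative multiple of `uᵀ P u ≥ 0`.
-/

open Matrix

theorem dotProduct_mulVec_comm_of_isSymm {ι R : Type*} [Fintype ι] [NonUnitalCommSemiring R]
    {P : Matrix ι ι R} (hP : P.IsSymm) (u v : ι → R) :
    u ⬝ᵥ P *ᵥ v = v ⬝ᵥ P *ᵥ u := by
  rw [dotProduct_mulVec, dotProduct_comm, ← mulVec_transpose, hP.eq]

section Derivative

variable {𝕜 𝔸 ι κ : Type*} [NontriviallyNormedField 𝕜] [NormedRing 𝔸] [NormedAlgebra 𝕜 𝔸]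
  [Fintype ι] {u v : 𝕜 → ι → 𝔸} {u' v' : ι → 𝔸} {t : 𝕜}

theorem hasDerivAt_dotProduct (hu : HasDerivAt u u' t) (hv : HasDerivAt v v' t) :
    HasDerivAt (fun s => u s ⬝ᵥ v s) (u' ⬝ᵥ v t + u t ⬝ᵥ v') t := by
  simp only [dotProduct, ← Finset.sum_add_distrib]
  exact HasDerivAt.fun_sum fun i _ => (hasDerivAt_pi.1 hu i).mul (hasDerivAt_pi.1 hv i)

theorem hasDerivAt_const_mulVec [Finite κ] (A : Matrix κ ι 𝔸) (hu : HasDerivAt u u' t) :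
    HasDerivAt (fun s => A *ᵥ u s) (A *ᵥ u') t := by
  have := Fintype.ofFinite κ
  exact hasDerivAt_pi.2 fun i =>
    HasDerivAt.fun_sum fun j _ => (hasDerivAt_pi.1 hu j).const_mul (A i j)

end Derivative

theorem hasDerivAt_dotProduct_mulVec_self {𝕜 𝔸 ι : Type*} [NontriviallyNormedField 𝕜]
    [NormedCommRing 𝔸] [NormedAlgebra 𝕜 𝔸] [Fintype ι] {P : Matrix ι ι 𝔸} (hP : P.IsSymm)
    {u : 𝕜 → ι → 𝔸} {u' : ι → 𝔸} {t : 𝕜} (hu : HasDerivAt u u' t) :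
    HasDerivAt (fun s => u s ⬝ᵥ P *ᵥ u s) (2 * (u t ⬝ᵥ P *ᵥ u')) t := by
  have hprod := hasDerivAt_dotProduct hu (hasDerivAt_const_mulVec P hu)
  rwa [dotProduct_mulVec_comm_of_isSymm hP u', ← two_mul] at hprod

section Modulation

variable {ι R : Type*} [Fintype ι] [DecidableEq ι] [CommRing R]

/-- The modulation matrix `M = E D E⁻¹` with gain `Γ`, which scales by `1 - Γ` along column `i₀` of
the basis matrix `E` and fixes the other columns. As `E⁻¹ = 0` for singular `E`, it has this meaning
only when `E` is invertible. -/
noncomputable def modulationMatrix (E : Matrix ι ι R) (i₀ : ι) (Γ : R) : Matrix ι ι R :=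
  E * diagonal (fun i => if i = i₀ then 1 - Γ else 1) * E⁻¹

theorem diagonal_ite_mulVec (i₀ : ι) (Γ : R) (g : ι → R) :
    diagonal (fun i => if i = i₀ then 1 - Γ else 1) *ᵥ g = g - Pi.single i₀ (Γ * g i₀) := by
  ext i
  rw [mulVec_diagonal, Pi.sub_apply]
  obtain rfl | hi := eq_or_ne i i₀
  · rw [if_pos rfl, Pi.single_eq_same, sub_mul, one_mul]
  · rw [if_neg hi, Pi.single_eq_of_ne hi, one_mul, sub_zero]

theorem modulationMatrix_mulVec {E : Matrix ι ι R} (hE : IsUnit E.det) (i₀ : ι) (Γ : R)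
    (f : ι → R) :
    modulationMatrix E i₀ Γ *ᵥ f = f - (Γ * (E⁻¹ *ᵥ f) i₀) • E.col i₀ := by
  rw [modulationMatrix, ← mulVec_mulVec, ← mulVec_mulVec, diagonal_ite_mulVec, mulVec_sub,
    mulVec_mulVec, mul_nonsing_inv E hE, one_mulVec, mulVec_single, op_smul_eq_smul]

theorem dotProduct_mulVec_modulationMatrix_le [PartialOrder R] [IsOrderedRing R]
    {P E : Matrix ι ι R} (hE : IsUnit E.det) {i₀ : ι} {u f : ι → R} {c Γ : R}
    (hu : 0 ≤ u ⬝ᵥ P *ᵥ u) (hc : 0 ≤ c) (hcol : E.col i₀ = c • u) (hΓ : 0 ≤ Γ)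
    (hf : 0 ≤ (E⁻¹ *ᵥ f) i₀) :
    u ⬝ᵥ P *ᵥ (modulationMatrix E i₀ Γ *ᵥ f) ≤ u ⬝ᵥ P *ᵥ f := by
  have hloss : 0 ≤ Γ * (E⁻¹ *ᵥ f) i₀ * (c * (u ⬝ᵥ P *ᵥ u)) :=
    mul_nonneg (mul_nonneg hΓ hf) (mul_nonneg hc hu)
  calc u ⬝ᵥ P *ᵥ (modulationMatrix E i₀ Γ *ᵥ f)
      = u ⬝ᵥ P *ᵥ f - Γ * (E⁻¹ *ᵥ f) i₀ * (c * (u ⬝ᵥ P *ᵥ u)) := by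
        simp only [modulationMatrix_mulVec hE, hcol, mulVec_sub, mulVec_smul, dotProduct_sub,
          dotProduct_smul, smul_eq_mul]
    _ ≤ u ⬝ᵥ P *ᵥ f := sub_le_self _ hloss

end Modulation

theorem modulated_lyapunov_decrease_along_curve_general {ι : Type*} [Fintype ι] [DecidableEq ι]
    {P E : Matrix ι ι ℝ} (hP : P.IsSymm) (hE : IsUnit E.det) {x : ℝ → ι → ℝ} {xstar f : ι → ℝ}
    {t c Γ : ℝ} {i₀ : ι} (hV : 0 ≤ (x t - xstar) ⬝ᵥ P *ᵥ (x t - xstar))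
    (hdec : 2 * ((x t - xstar) ⬝ᵥ P *ᵥ f) < 0) (hc : 0 ≤ c)
    (hcol : E.col i₀ = c • (x t - xstar)) (hΓ : 0 ≤ Γ) (hf : 0 ≤ (E⁻¹ *ᵥ f) i₀)
    (hx : HasDerivAt x (modulationMatrix E i₀ Γ *ᵥ f) t) :
    ∃ d : ℝ, d < 0 ∧ HasDerivAt (fun s => (x s - xstar) ⬝ᵥ P *ᵥ (x s - xstar)) d t := by
  refine ⟨_, ?_, hasDerivAt_dotProduct_mulVec_self hP (hx.sub_const xstar)⟩
  have hle := dotProduct_mulVec_modulationMatrix_le hE hV hc hcol hΓ hf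
  exact (mul_le_mul_of_nonneg_left hle zero_le_two).trans_lt hdec

/-- Along a differentiable curve `x(·)` whose velocity at time `t` is the
modulated field `M f` (with `M = E D E⁻¹`, `D = diag(1 − Γ, 1, …, 1)`,
`Γ > 0`, first column of `E` equal to `r = (x(t) − x*)/‖x(t) − x*‖`,
`(E⁻¹ f)₁ ≥ 0`), if `f` satisfies the nominal Lyapunov decrease
`2 (x(t) − x*)ᵀ P f < 0` for `P` symmetric positive definite, then
`t ↦ V(x(t)) = (x(t) − x*)ᵀ P (x(t) − x*)` has strictly negative derivative
at `t`. -/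
theorem modulated_lyapunov_decrease_along_curve {n : ℕ} [NeZero n]
    (P : Matrix (Fin n) (Fin n) ℝ) (hP : P.PosDef)
    (xstar : Fin n → ℝ)
    (x : ℝ → (Fin n → ℝ)) (t : ℝ)
    (hxne : x t ≠ xstar)
    (f : Fin n → ℝ)
    (hdec : 2 * ((x t - xstar) ⬝ᵥ P.mulVec f) < 0)
    (E : Matrix (Fin n) (Fin n) ℝ) (hE : IsUnit E.det)
    (r : Fin n → ℝ)
    (hr : r = (Real.sqrt ((x t - xstar) ⬝ᵥ (x t - xstar)))⁻¹ • (x t - xstar))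
    (hEr : ∀ i, E i 0 = r i)
    (Γ : ℝ) (hΓ : 0 < Γ)
    (D M : Matrix (Fin n) (Fin n) ℝ)
    (hD : D = Matrix.diagonal (fun i => if i = 0 then 1 - Γ else 1))
    (hM : M = E * D * E⁻¹)
    (hcomp : 0 ≤ E⁻¹.mulVec f 0)
    (hx : HasDerivAt x (M.mulVec f) t) :
    ∃ d : ℝ, d < 0 ∧
      HasDerivAt (fun s => (x s - xstar) ⬝ᵥ P.mulVec (x s - xstar)) d t := by
  subst hr hD hM
  exact modulated_lyapunov_decrease_along_curve_general (isHermitian_iff_isSymm.1 hP.isHermitian) hE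
    (hP.posSemidef.dotProduct_mulVec_nonneg _) hdec (inv_nonneg.2 (Real.sqrt_nonneg _))
    (funext hEr) hΓ.le hcomp hx
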